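/- Let P be a finite pure weighted graded poset of rank d possessing Property UL with constants (c^xyz_l, c^dia_l, c^sqr_l), and assume c^dia_l > 0. Then for any 0 ≤ l ≤ d−1 and all f, g ∈ C^l: ⟨U_l f, U_l g⟩ = (1/c^dia_l)·Σ_{z∈P(l−1)} m(z)·⟨U_{z,0}(f_z), U_{z,0}(g_z)⟩_z − c^sqr_l·(c^xyz_l/c^dia_l − 1)·⟨f,g⟩. -/

import Mathlib

open Finset

attribute [local instance] Classical.propDecidable

noncomputable section

/-- A finite pure weighted graded poset of rank `d`, presented as a rank function
and a weight scheme on a finite partial order `P`. -/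
structure WGP (P : Type) [Fintype P] [PartialOrder P] where
  /-- the rank of the poset -/
  d : ℤ
  /-- the rank function -/
  rk : P → ℤ
  rk_mono : Monotone rk
  rk_lb : ∀ x, -1 ≤ rk x
  rk_ub : ∀ x, rk x ≤ d
  rk_covBy : ∀ a b : P, a ⋖ b → rk b = rk a + 1
  bot_unique : ∃! x : P, rk x = -1
  isPure : ∀ x : P, ∃ y : P, rk y = d ∧ x ≤ y
  /-- the weight function -/
  m : P → ℝ
  m_pos : ∀ x, 0 < m x
  /-- the transition probabilities: `p y x` is `p_{y → x}` -/
  p : P → P → ℝ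
  p_nonneg : ∀ y x, 0 ≤ p y x
  p_pos_iff : ∀ y x, 0 < p y x ↔ x ⋖ y
  p_sum : ∀ y, 0 ≤ rk y → ∑ x ∈ univ.filter (fun x => x ⋖ y), p y x = 1
  m_eq : ∀ x, rk x < d → m x = ∑ y ∈ univ.filter (fun y => x ⋖ y), p y x * m y
  m_bot : ∀ x, rk x = -1 → m x = 1

/-- `T` has at most `n` eigenvalues greater than `c`, counted with
(geometric) multiplicity. -/
def eigMultAboveLe {V : Type*} [AddCommGroup V] [Module ℝ V]
    (T : Module.End ℝ V) (c : ℝ) (n : ℕ) : Prop :=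
  ∀ s : Finset ℝ, (∀ μ ∈ s, c < μ) →
    ∑ μ ∈ s, Module.finrank ℝ (T.eigenspace μ) ≤ n

/-- `μ` is the second largest eigenvalue of `T`, counted with multiplicity. -/
def IsSecondLargestEig {V : Type*} [AddCommGroup V] [Module ℝ V]
    (T : Module.End ℝ V) (μ : ℝ) : Prop :=
  T.HasEigenvalue μ ∧ eigMultAboveLe T μ 1 ∧
    ∃ s : Finset ℝ, (∀ ν ∈ s, μ ≤ ν) ∧
      2 ≤ ∑ ν ∈ s, Module.finrank ℝ (T.eigenspace ν)

/-- `ν` is the least eigenvalue of `T`. -/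
def IsLeastEig {V : Type*} [AddCommGroup V] [Module ℝ V]
    (T : Module.End ℝ V) (ν : ℝ) : Prop :=
  T.HasEigenvalue ν ∧ ∀ c : ℝ, T.HasEigenvalue c → ν ≤ c

/-- `λ(T) ≤ lam`, i.e. the second largest eigenvalue of `T` (with multiplicity)
is at most `lam` and the least eigenvalue is at least `-lam`. -/
def lamBd {V : Type*} [AddCommGroup V] [Module ℝ V]
    (T : Module.End ℝ V) (lam : ℝ) : Prop :=
  eigMultAboveLe T lam 1 ∧ ∀ c : ℝ, T.HasEigenvalue c → -lam ≤ c

namespace WGP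

variable {P : Type} [Fintype P] [PartialOrder P] (W : WGP P)

/-- The level set `P(i)`. -/
def lvl (i : ℤ) : Finset P := univ.filter (fun x => W.rk x = i)

/-- The weighted inner product on `C^i`. -/
def innerAt (i : ℤ) (f g : P → ℝ) : ℝ := ∑ x ∈ W.lvl i, W.m x * f x * g x

/-- The squared norm on `C^i`. -/
def normSqAt (i : ℤ) (f : P → ℝ) : ℝ := W.innerAt i f f

/-- The norm on `C^i`. -/
def normAt (i : ℤ) (f : P → ℝ) : ℝ := Real.sqrt (W.normSqAt i f)

/-- The matrix of transition probabilities : entry `(y, x)` is `p_{y→x}`,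
which vanishes unless `x ⋖ y`.  This is also the matrix of the up operator. -/
def upMat : Matrix P P ℝ := Matrix.of fun y x => W.p y x

/-- The matrix of the down operator. -/
def downMat : Matrix P P ℝ := Matrix.of fun x y => W.p y x * W.m y / W.m x

/-- The up operator `U`. -/
def Up (f : P → ℝ) : P → ℝ := W.upMat.mulVec f

/-- The down operator `D`. -/
def Down (f : P → ℝ) : P → ℝ := W.downMat.mulVec f

/-- `chSum x y = Σ_{c ∈ Ch(y→x)} p(c)`, the total `p`-weight of maximal chains
from `x` up to `y` (the entry of the corresponding power of the transition
matrix). -/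
def chSum (x y : P) : ℝ := (W.upMat ^ (W.rk y - W.rk x).toNat) y x

/-- The induced weight function of the link `P_x`. -/
def mL (x y : P) : ℝ := W.m y / W.m x * W.chSum x y

/-- The induced transition probabilities of the link `P_x` :
`pL x z y = (p_x)_{z → y}`. -/
def pL (x z y : P) : ℝ := W.p z y * W.chSum x y / W.chSum x z

/-- The level set `P_x(j)` of the link of `x`. -/
def linkLvl (x : P) (j : ℤ) : Finset P :=
  univ.filter (fun y => x ≤ y ∧ W.rk y = W.rk x + 1 + j)

/-- The inner product of the link `P_x` at link-level `j`. -/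
def innerL (x : P) (j : ℤ) (f g : P → ℝ) : ℝ :=
  ∑ y ∈ W.linkLvl x j, W.mL x y * f y * g y

/-- The matrix of the up operator of the link `P_x`. -/
def upMatL (x : P) : Matrix P P ℝ :=
  Matrix.of fun z y => if y ⋖ z ∧ x ≤ y then W.pL x z y else 0

/-- The matrix of the down operator of the link `P_x`. -/
def downMatL (x : P) : Matrix P P ℝ :=
  Matrix.of fun y z => if y ⋖ z then W.pL x z y * W.mL x z / W.mL x y else 0

/-- The up operator of the link `P_x`. -/
def UpL (x : P) (f : P → ℝ) : P → ℝ := (W.upMatL x).mulVec f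

/-- The down operator of the link `P_x`. -/
def DownL (x : P) (f : P → ℝ) : P → ℝ := (W.downMatL x).mulVec f

/-- The up-down walk `M^+_{x,0}` of the link `P_x`. -/
def MplusL (x : P) (f : P → ℝ) : P → ℝ := W.DownL x (W.UpL x f)

/-- The down-up walk `M^-_{x,0}` of the link `P_x`. -/
def MminusL (x : P) (f : P → ℝ) : P → ℝ := W.UpL x (W.DownL x f)

/-- The adjacency matrix. -/
def adjMat : Matrix P P ℝ := Matrix.of fun y x =>
  if x = y then 0 else
    ∑ z ∈ univ.filter (fun z => x ⋖ z ∧ y ⋖ z),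
      W.m z * W.p z x * W.p z y / ((1 - W.p z y) * W.m y)

/-- The adjacency operator. -/
def Adj (f : P → ℝ) : P → ℝ := W.adjMat.mulVec f

/-- The adjacency matrix of the link `P_x`. -/
def adjMatL (x : P) : Matrix P P ℝ := Matrix.of fun y w =>
  if w = y then 0 else
    ∑ z ∈ univ.filter (fun z => w ⋖ z ∧ y ⋖ z),
      W.mL x z * W.pL x z w * W.pL x z y / ((1 - W.pL x z y) * W.mL x y)

/-- The adjacency operator of the link `P_x`. -/
def AdjL (x : P) (f : P → ℝ) : P → ℝ := (W.adjMatL x).mulVec f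

/-- The up-down walk `M^+_l` as an endomorphism of `C^l`. -/
def MplusEnd (l : ℤ) : Module.End ℝ ({x : P // W.rk x = l} → ℝ) :=
  ((W.downMat * W.upMat).submatrix Subtype.val Subtype.val).mulVecLin

/-- The up-down walk `M^+_{x,0}` as an endomorphism of `C^0(P_x)`. -/
def MplusEndL (x : P) : Module.End ℝ ({y : P // x ⋖ y} → ℝ) :=
  ((W.downMatL x * W.upMatL x).submatrix Subtype.val Subtype.val).mulVecLin

/-- The adjacency operator `A_x` of the link `P_x` as an endomorphism of
`C^0(P_x)`. -/
def AdjEndL (x : P) : Module.End ℝ ({y : P // x ⋖ y} → ℝ) :=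
  ((W.adjMatL x).submatrix Subtype.val Subtype.val).mulVecLin

/-- A standard weight scheme. -/
def Standard : Prop :=
  ∀ y x : P, x ⋖ y → W.p y x = 1 / ((univ.filter (fun z => z ⋖ y)).card : ℝ)

/-- `P` is lower regular at level `i` with constant `N`. -/
def LowerRegAt (i : ℤ) (N : ℕ) : Prop :=
  ∀ y : P, W.rk y = i → (univ.filter (fun z => z ⋖ y)).card = N

/-- `P` is middle regular at level `i` with constant `N`. -/
def MiddleRegAt (i : ℤ) (N : ℕ) : Prop :=
  ∀ x z : P, W.rk x = i + 1 → W.rk z = i - 1 → z < x →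
    (univ.filter (fun y => z ⋖ y ∧ y ⋖ x)).card = N

/-- `P` is `∨∧`-regular at level `i` with constant `N`. -/
def WedgeRegAt (i : ℤ) (N : ℕ) : Prop :=
  ∀ y₁ y₂ : P, W.rk y₁ = i → W.rk y₂ = i → y₁ ≠ y₂ → (∃ z, y₁ ⋖ z ∧ y₂ ⋖ z) →
    (univ.filter (fun s => s ⋖ y₁ ∧ s ⋖ y₂)).card = N

/-- `P` is `⅄`-regular with constant `R`. -/
def WyeReg (R : ℕ) : Prop :=
  ∀ u y₁ y₂ : P, W.rk u = 2 → W.rk y₁ = 0 → W.rk y₂ = 0 → y₁ ≠ y₂ →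
    y₁ < u → y₂ < u →
    (univ.filter (fun z => y₁ ⋖ z ∧ y₂ ⋖ z ∧ z ⋖ u)).card = R

/-- Property UL.1 with constants `c`. -/
def UL1 (c : ℤ → ℝ) : Prop :=
  ∀ l : ℤ, 0 ≤ l → l < W.d → ∀ y : P, W.rk y = l → ∀ x : P, y ⋖ x →
    ∑ z ∈ univ.filter (fun z => z ⋖ y), W.p y z ^ 2 / W.chSum z x = c l

/-- Property UL.2 with constants `c`. -/
def UL2 (c : ℤ → ℝ) : Prop :=
  ∀ l : ℤ, 0 ≤ l → l < W.d → ∀ y₁ y₂ : P, W.rk y₁ = l → W.rk y₂ = l → y₁ ≠ y₂ →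
    ∀ x : P, y₁ ⋖ x → y₂ ⋖ x →
    ∑ z ∈ univ.filter (fun z => z ⋖ y₁ ∧ z ⋖ y₂),
      W.p y₁ z * W.p y₂ z / W.chSum z x = c l

/-- Property UL.3 with constants `c`. -/
def UL3 (c : ℤ → ℝ) : Prop :=
  ∀ l : ℤ, 0 ≤ l → l < W.d → ∀ y : P, W.rk y = l →
    ∑ x ∈ univ.filter (fun x => y ⋖ x), W.m x * W.p x y ^ 2 = c l * W.m y

/-- Property AL. -/
def AL : Prop :=
  ∀ l : ℤ, 0 ≤ l → l ≤ W.d - 1 → ∀ x y : P, W.rk x = l → W.rk y = l → x ≠ y →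
    ∑ z ∈ univ.filter (fun z => x ⋖ z ∧ y ⋖ z),
        W.m z * W.p z x * W.p z y / (1 - W.p z x)
    = ∑ z ∈ univ.filter (fun z => x ⋖ z ∧ y ⋖ z),
        W.m z * W.p z x * W.p z y *
          ∑ s ∈ univ.filter (fun s => s ⋖ x ∧ s ⋖ y),
            W.p x s * W.p y s / (W.chSum s z - W.p z x * W.p x s)

/-- Equation TL.1 with constant `c`. -/
def TL1 (c : ℝ) : Prop :=
  ∀ y : P, W.rk y = 0 →
    c * W.m y = ∑ z ∈ univ.filter (fun z => y ⋖ z), W.m z * W.p z y ^ 2 *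
      ∑ x ∈ univ.filter (fun x => x ⋖ z ∧ x ≠ y), W.p z x / (1 - W.p z x) ^ 2

/-- Equation TL.2 with constant `c`. -/
def TL2 (c : ℝ) : Prop :=
  ∀ y₁ y₂ : P, W.rk y₁ = 0 → W.rk y₂ = 0 → y₁ ≠ y₂ →
    c * ∑ z ∈ univ.filter (fun z => y₁ ⋖ z ∧ y₂ ⋖ z),
          W.m z * W.p z y₁ * W.p z y₂ / (1 - W.p z y₁)
    = ∑ z ∈ univ.filter (fun z => y₁ ⋖ z ∧ y₂ ⋖ z),
        W.m z * W.p z y₁ * W.p z y₂ *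
          ∑ x ∈ univ.filter (fun x => x ⋖ z ∧ x ≠ y₁ ∧ x ≠ y₂),
            W.p z x / (1 - W.p z x) ^ 2

/-- Equation TL.3 with constant `c`. -/
def TL3 (c : ℝ) : Prop :=
  ∀ y : P, W.rk y = 0 →
    c * W.m y =
      ∑ x ∈ univ.filter (fun x => W.rk x = 0 ∧ x ≠ y),
        ∑ z ∈ univ.filter (fun z => x ⋖ z ∧ y ⋖ z),
          ∑ w ∈ univ.filter (fun w => w ≠ z ∧ x ⋖ w ∧ y ⋖ w),
            ∑ u ∈ univ.filter (fun u => z ⋖ u ∧ w ⋖ u),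
              W.m u * W.p u z * W.p u w * W.p w y * W.p z y * W.p w x * W.p z x /
                (W.chSum x u * (1 - W.p u z * W.p z x / W.chSum x u) *
                  (1 - W.p w x) * (1 - W.p z x))

/-- Equation TL.4 with constant `c`. -/
def TL4 (c : ℝ) : Prop :=
  ∀ y₁ y₂ : P, W.rk y₁ = 0 → W.rk y₂ = 0 → y₁ ≠ y₂ →
    c * ∑ z ∈ univ.filter (fun z => y₁ ⋖ z ∧ y₂ ⋖ z),
          W.m z * W.p z y₁ * W.p z y₂ / (1 - W.p z y₁)
    = ∑ x ∈ univ.filter (fun x => W.rk x = 0 ∧ x ≠ y₁ ∧ x ≠ y₂),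
        ∑ z ∈ univ.filter (fun z => x ⋖ z ∧ y₂ ⋖ z),
          ∑ w ∈ univ.filter (fun w => w ≠ z ∧ x ⋖ w ∧ y₁ ⋖ w),
            ∑ u ∈ univ.filter (fun u => z ⋖ u ∧ w ⋖ u),
              W.m u * W.p u z * W.p u w * W.p w y₁ * W.p z y₂ * W.p w x * W.p z x /
                (W.chSum x u * (1 - W.p u z * W.p z x / W.chSum x u) *
                  (1 - W.p w x) * (1 - W.p z x))

/-- The induced function `f̂_x ∈ C^0(P_x)` of `f ∈ C^0`. -/
def hatF (x : P) (f : P → ℝ) : P → ℝ := fun z =>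
  (1 / (1 - W.p z x)) * ∑ y ∈ univ.filter (fun y => y ≠ x ∧ y ⋖ z), W.p z y * f y

/-- `P` is connected: the Markov chain `M^+_0` on `P(0)` is irreducible. -/
def Connected : Prop :=
  ∀ y z : P, W.rk y = 0 → W.rk z = 0 →
    ∃ j : ℕ, 0 < j ∧ ((W.downMat * W.upMat) ^ j) z y ≠ 0

/-- The link `P_x` is connected: the Markov chain `M^+_{x,0}` on `P_x(0)` is
irreducible. -/
def LinkConnected (x : P) : Prop :=
  ∀ y z : P, x ⋖ y → x ⋖ z →
    ∃ j : ℕ, 0 < j ∧ ((W.downMatL x * W.upMatL x) ^ j) z y ≠ 0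

/-- `c` is a nontrivial eigenvalue of the adjacency operator `A` of `P`,
i.e. one with an eigenvector orthogonal to the constants. -/
def IsNontrivEigAdj (c : ℝ) : Prop :=
  ∃ f : P → ℝ, (∃ y, W.rk y = 0 ∧ f y ≠ 0) ∧
    (∀ y, W.rk y = 0 → W.Adj f y = c * f y) ∧
    W.innerAt 0 f (fun _ => 1) = 0

/-- `c` is a nontrivial eigenvalue of the adjacency operator `A_x` of the
link `P_x`. -/
def IsNontrivEigAdjL (x : P) (c : ℝ) : Prop :=
  ∃ f : P → ℝ, (∃ y, x ⋖ y ∧ f y ≠ 0) ∧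
    (∀ y, x ⋖ y → W.AdjL x f y = c * f y) ∧
    W.innerL x 0 f (fun _ => 1) = 0

end WGP

/-!
The up operator of the link of `z` is the Doob transform of the up operator of `P` by the chain
weight `y ↦ Σ_{c ∈ Ch(y→z)} p(c)`, so summing the forms `m(z) ⟨U_z f, U_z g⟩_z` over a level set
gives the quadratic form of `⟨U f, U g⟩` with the entry at each pair `y₁, y₂ ⋖ x` multiplied by a
kernel depending on `x, y₁, y₂` only. Two levels below `x`, (UL.1) and (UL.2) make this kernel
constant on the diagonal and constant off it; the off-diagonal constant reproduces `⟨U f, U g⟩`,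
and (UL.3) turns the remaining diagonal into a multiple of `⟨f, g⟩`.
-/

namespace WGP

variable {P : Type} [Fintype P] [PartialOrder P] (W : WGP P)

theorem mem_lvl {i : ℤ} {x : P} : x ∈ W.lvl i ↔ W.rk x = i := by
  simp only [lvl, mem_filter, mem_univ, true_and]

theorem covBy_of_p_ne_zero {x y : P} (h : W.p y x ≠ 0) : x ⋖ y :=
  (W.p_pos_iff y x).1 ((W.p_nonneg y x).lt_of_ne' h)

theorem up_apply (f : P → ℝ) (x : P) : W.Up f x = ∑ y, W.p x y * f y := rfl

theorem up_mul_up (f g : P → ℝ) (x : P) :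
    W.Up f x * W.Up g x = ∑ y₁, ∑ y₂, (W.p x y₁ * f y₁) * (W.p x y₂ * g y₂) := by
  rw [up_apply, up_apply, sum_mul_sum]

theorem le_of_upMat_pow_ne_zero {n : ℕ} {x y : P} (h : (W.upMat ^ n) y x ≠ 0) : x ≤ y := by
  induction n generalizing y with
  | zero =>
    by_contra hxy
    exact h (Matrix.one_apply_ne fun hyx => hxy hyx.ge)
  | succ n ih =>
    rw [pow_succ', Matrix.mul_apply] at h
    obtain ⟨w, -, hw⟩ := exists_ne_zero_of_sum_ne_zero h
    exact (ih (right_ne_zero_of_mul hw)).trans (W.covBy_of_p_ne_zero (left_ne_zero_of_mul hw)).le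

theorem le_of_chSum_ne_zero {x y : P} (h : W.chSum x y ≠ 0) : x ≤ y :=
  W.le_of_upMat_pow_ne_zero h

theorem chSum_of_rk_eq_add_one {x y : P} (h : W.rk y = W.rk x + 1) :
    W.chSum x y = W.p y x := by
  simp [chSum, upMat, h]

theorem upMatL_apply (z x y : P) : W.upMatL z x y = W.pL z x y := by
  refine ite_eq_left_iff.2 fun hzyx => ?_
  by_contra hne
  have hnum : W.p x y * W.chSum z y ≠ 0 := (div_ne_zero_iff.1 (Ne.symm hne)).1
  exact hzyx ⟨W.covBy_of_p_ne_zero (left_ne_zero_of_mul hnum),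
    W.le_of_chSum_ne_zero (right_ne_zero_of_mul hnum)⟩

theorem upL_apply (z : P) (f : P → ℝ) (x : P) :
    W.UpL z f x = W.Up (fun y => W.chSum z y * f y) x / W.chSum z x := by
  simp only [UpL, Matrix.mulVec, dotProduct, upMatL_apply, pL, up_apply, sum_div]
  exact sum_congr rfl fun y _ => by ring

theorem m_mul_innerL (z : P) (j : ℤ) (f g : P → ℝ) :
    W.m z * W.innerL z j f g =
      ∑ x ∈ W.lvl (W.rk z + 1 + j), W.m x * W.chSum z x * f x * g x := by
  have hlink : W.linkLvl z j = (W.lvl (W.rk z + 1 + j)).filter (z ≤ ·) := by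
    simp only [linkLvl, lvl, filter_filter, and_comm]
  have hsupp (x : P) (hx : W.m x * W.chSum z x * f x * g x ≠ 0) : z ≤ x :=
    W.le_of_chSum_ne_zero (right_ne_zero_of_mul (left_ne_zero_of_mul (left_ne_zero_of_mul hx)))
  rw [innerL, hlink, mul_sum, ← sum_filter_of_ne (p := (z ≤ ·)) fun x _ => hsupp x]
  refine sum_congr rfl fun x _ => ?_
  rw [mL]
  field_simp [(W.m_pos z).ne']

theorem m_mul_innerL_upL (z : P) (j : ℤ) (f g : P → ℝ) :
    W.m z * W.innerL z j (W.UpL z f) (W.UpL z g) =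
      ∑ x ∈ W.lvl (W.rk z + 1 + j), W.m x *
        (W.Up (fun y => W.chSum z y * f y) x * W.Up (fun y => W.chSum z y * g y) x /
          W.chSum z x) := by
  rw [m_mul_innerL]
  refine sum_congr rfl fun x _ => ?_
  rw [upL_apply, upL_apply]
  by_cases hzx : W.chSum z x = 0
  · simp [hzx]
  · field_simp

/-- The kernel `Σ_{z ∈ P(i)} ch(y₁→z) ch(y₂→z) / ch(x→z)`, where `ch(y→z)` is the total weight of
the maximal chains from `y` down to `z`: the factor by which localizing at the links of rank-`i`
elements multiplies the `(y₁, y₂)` entry of `f, g ↦ (U f)(x) (U g)(x)`. For `y₁, y₂ ⋖ x` and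
`i = rk x - 2` it is the left side of (UL.1) or (UL.2). Elements `z ≰ x` contribute `0 / 0 = 0`
when `y₁, y₂ ≤ x`. -/
def linkKernel (i : ℤ) (x y₁ y₂ : P) : ℝ :=
  ∑ z ∈ W.lvl i, W.chSum z y₁ * W.chSum z y₂ / W.chSum z x

theorem sum_up_mul_up_div_chSum (i : ℤ) (x : P) (f g : P → ℝ) :
    ∑ z ∈ W.lvl i, W.Up (fun y => W.chSum z y * f y) x *
        W.Up (fun y => W.chSum z y * g y) x / W.chSum z x =
      ∑ y₁, ∑ y₂, (W.p x y₁ * f y₁) * (W.p x y₂ * g y₂) * W.linkKernel i x y₁ y₂ := by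
  simp only [up_mul_up, sum_div, linkKernel, mul_sum]
  rw [sum_comm]
  refine sum_congr rfl fun y₁ _ => ?_
  rw [sum_comm]
  exact sum_congr rfl fun y₂ _ => sum_congr rfl fun z _ => by ring

theorem sum_m_mul_innerL_upL (i j : ℤ) (f g : P → ℝ) :
    ∑ z ∈ W.lvl i, W.m z * W.innerL z j (W.UpL z f) (W.UpL z g) =
      ∑ x ∈ W.lvl (i + 1 + j), W.m x *
        ∑ y₁, ∑ y₂, (W.p x y₁ * f y₁) * (W.p x y₂ * g y₂) * W.linkKernel i x y₁ y₂ := by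
  simp only [← sum_up_mul_up_div_chSum, mul_sum]
  rw [sum_comm]
  refine sum_congr rfl fun z hz => ?_
  rw [m_mul_innerL_upL, W.mem_lvl.1 hz]

theorem linkKernel_eq_sum_covBy {l : ℤ} {y₁ y₂ : P} (x : P) (hy₁ : W.rk y₁ = l)
    (hy₂ : W.rk y₂ = l) :
    W.linkKernel (l - 1) x y₁ y₂ =
      ∑ z ∈ univ.filter (fun z => z ⋖ y₁ ∧ z ⋖ y₂), W.p y₁ z * W.p y₂ z / W.chSum z x := by
  have hsub : univ.filter (fun z => z ⋖ y₁ ∧ z ⋖ y₂) ⊆ W.lvl (l - 1) := fun z hz => by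
    have := W.rk_covBy z y₁ (mem_filter.1 hz).2.1
    exact W.mem_lvl.2 (by omega)
  have hch {y z : P} (hy : W.rk y = l) (hz : z ∈ W.lvl (l - 1)) : W.chSum z y = W.p y z :=
    W.chSum_of_rk_eq_add_one (by rw [hy, W.mem_lvl.1 hz, sub_add_cancel])
  calc W.linkKernel (l - 1) x y₁ y₂
      = ∑ z ∈ W.lvl (l - 1), W.p y₁ z * W.p y₂ z / W.chSum z x :=
        sum_congr rfl fun z hz => by rw [hch hy₁ hz, hch hy₂ hz]
    _ = _ := (sum_subset hsub fun z _ hz => by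
        contrapose! hz
        have hnum := (div_ne_zero_iff.1 hz).1
        exact mem_filter.2 ⟨mem_univ z, W.covBy_of_p_ne_zero (left_ne_zero_of_mul hnum),
          W.covBy_of_p_ne_zero (right_ne_zero_of_mul hnum)⟩).symm

variable {W} {cxyz cdia csqr : ℤ → ℝ} {l : ℤ}

theorem UL1.linkKernel_self (h : W.UL1 cxyz) (hl0 : 0 ≤ l) (hld : l < W.d) {x y : P}
    (hy : W.rk y = l) (hyx : y ⋖ x) : W.linkKernel (l - 1) x y y = cxyz l := by
  rw [linkKernel_eq_sum_covBy W x hy hy, ← h l hl0 hld y hy x hyx]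
  simp only [and_self, pow_two]

theorem UL2.linkKernel_of_ne (h : W.UL2 cdia) (hl0 : 0 ≤ l) (hld : l < W.d) {x y₁ y₂ : P}
    (hy₁ : W.rk y₁ = l) (hy₂ : W.rk y₂ = l) (hne : y₁ ≠ y₂) (hy₁x : y₁ ⋖ x) (hy₂x : y₂ ⋖ x) :
    W.linkKernel (l - 1) x y₁ y₂ = cdia l := by
  rw [linkKernel_eq_sum_covBy W x hy₁ hy₂, h l hl0 hld y₁ y₂ hy₁ hy₂ hne x hy₁x hy₂x]

theorem linkKernel_eq (h1 : W.UL1 cxyz) (h2 : W.UL2 cdia) (hl0 : 0 ≤ l) (hld : l < W.d)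
    {x y₁ y₂ : P} (hx : W.rk x = l + 1) (hy₁x : y₁ ⋖ x) (hy₂x : y₂ ⋖ x) :
    W.linkKernel (l - 1) x y₁ y₂ = cdia l + if y₁ = y₂ then cxyz l - cdia l else 0 := by
  have rk_eq {y : P} (hyx : y ⋖ x) : W.rk y = l := by
    have := W.rk_covBy y x hyx
    omega
  split_ifs with heq
  · subst heq
    rw [h1.linkKernel_self hl0 hld (rk_eq hy₁x) hy₁x, add_sub_cancel]
  · rw [h2.linkKernel_of_ne hl0 hld (rk_eq hy₁x) (rk_eq hy₂x) heq hy₁x hy₂x, add_zero]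

theorem sum_mul_linkKernel (h1 : W.UL1 cxyz) (h2 : W.UL2 cdia) (hl0 : 0 ≤ l) (hld : l < W.d)
    {x : P} (hx : W.rk x = l + 1) (f g : P → ℝ) :
    ∑ y₁, ∑ y₂, (W.p x y₁ * f y₁) * (W.p x y₂ * g y₂) * W.linkKernel (l - 1) x y₁ y₂ =
      cdia l * (W.Up f x * W.Up g x) +
        (cxyz l - cdia l) * ∑ y, W.p x y ^ 2 * f y * g y := by
  have hkernel (y₁ y₂ : P) :
      (W.p x y₁ * f y₁) * (W.p x y₂ * g y₂) * W.linkKernel (l - 1) x y₁ y₂ =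
        cdia l * ((W.p x y₁ * f y₁) * (W.p x y₂ * g y₂)) +
          if y₁ = y₂ then (cxyz l - cdia l) * ((W.p x y₁ * f y₁) * (W.p x y₂ * g y₂)) else 0 := by
    by_cases hy₁ : W.p x y₁ = 0
    · simp [hy₁]
    by_cases hy₂ : W.p x y₂ = 0
    · simp [hy₂]
    rw [linkKernel_eq h1 h2 hl0 hld hx (W.covBy_of_p_ne_zero hy₁) (W.covBy_of_p_ne_zero hy₂)]
    split_ifs <;> ring
  simp only [hkernel, sum_add_distrib, sum_ite_eq, mem_univ, if_true, up_mul_up, mul_sum]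
  exact congrArg _ (sum_congr rfl fun y _ => by ring)

theorem UL3.sum_m_mul_p_sq (h : W.UL3 csqr) (hl0 : 0 ≤ l) (hld : l < W.d) {y : P}
    (hy : W.rk y = l) : ∑ x ∈ W.lvl (l + 1), W.m x * W.p x y ^ 2 = csqr l * W.m y := by
  rw [← h l hl0 hld y hy]
  refine (sum_subset (fun x hx => ?_) fun x _ hx => ?_).symm
  · rw [mem_lvl, W.rk_covBy y x (mem_filter.1 hx).2, hy]
  · contrapose! hx
    exact mem_filter.2 ⟨mem_univ x,
      W.covBy_of_p_ne_zero (ne_zero_pow two_ne_zero (right_ne_zero_of_mul hx))⟩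

theorem UL3.sum_m_mul_sum_p_sq (h : W.UL3 csqr) (hl0 : 0 ≤ l) (hld : l < W.d)
    (f g : P → ℝ) :
    ∑ x ∈ W.lvl (l + 1), W.m x * ∑ y, W.p x y ^ 2 * f y * g y =
      csqr l * W.innerAt l f g := by
  have hlevel {x : P} (hx : x ∈ W.lvl (l + 1)) :
      ∑ y, W.p x y ^ 2 * f y * g y = ∑ y ∈ W.lvl l, W.p x y ^ 2 * f y * g y := by
    refine (sum_subset (subset_univ _) fun y _ hy => ?_).symm
    contrapose! hy
    have hyx := W.covBy_of_p_ne_zero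
      (ne_zero_pow two_ne_zero (left_ne_zero_of_mul (left_ne_zero_of_mul hy)))
    rw [mem_lvl] at hx ⊢
    have := W.rk_covBy y x hyx
    omega
  calc ∑ x ∈ W.lvl (l + 1), W.m x * ∑ y, W.p x y ^ 2 * f y * g y
      = ∑ x ∈ W.lvl (l + 1), ∑ y ∈ W.lvl l, W.m x * (W.p x y ^ 2 * f y * g y) :=
        sum_congr rfl fun x hx => by rw [hlevel hx, mul_sum]
    _ = ∑ y ∈ W.lvl l, (∑ x ∈ W.lvl (l + 1), W.m x * W.p x y ^ 2) * (f y * g y) := by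
        rw [sum_comm]
        simp only [sum_mul]
        exact sum_congr rfl fun y _ => sum_congr rfl fun x _ => by ring
    _ = csqr l * W.innerAt l f g := by
        rw [innerAt, mul_sum]
        refine sum_congr rfl fun y hy => ?_
        rw [h.sum_m_mul_p_sq hl0 hld (W.mem_lvl.1 hy)]
        ring

theorem sum_m_mul_innerL_one_upL (h1 : W.UL1 cxyz) (h2 : W.UL2 cdia) (h3 : W.UL3 csqr)
    (hl0 : 0 ≤ l) (hld : l < W.d) (f g : P → ℝ) :
    ∑ z ∈ W.lvl (l - 1), W.m z * W.innerL z 1 (W.UpL z f) (W.UpL z g) =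
      cdia l * W.innerAt (l + 1) (W.Up f) (W.Up g) +
        (cxyz l - cdia l) * (csqr l * W.innerAt l f g) := by
  rw [sum_m_mul_innerL_upL, sub_add_cancel, ← h3.sum_m_mul_sum_p_sq hl0 hld, innerAt, mul_sum,
    mul_sum, ← sum_add_distrib]
  refine sum_congr rfl fun x hx => ?_
  rw [sum_mul_linkKernel h1 h2 hl0 hld (W.mem_lvl.1 hx)]
  ring

end WGP

/-- Garland-type localization of `⟨U_l f, U_l g⟩` under
Property UL. -/
theorem stmt4 {P : Type} [Fintype P] [PartialOrder P] (W : WGP P)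
    (cxyz cdia csqr : ℤ → ℝ)
    (h1 : W.UL1 cxyz) (h2 : W.UL2 cdia) (h3 : W.UL3 csqr)
    (l : ℤ) (hl0 : 0 ≤ l) (hld : l ≤ W.d - 1) (hdia : 0 < cdia l)
    (f g : P → ℝ) :
    W.innerAt (l + 1) (W.Up f) (W.Up g)
      = (1 / cdia l) *
          (∑ z ∈ W.lvl (l - 1), W.m z * W.innerL z 1 (W.UpL z f) (W.UpL z g))
        - csqr l * (cxyz l / cdia l - 1) * W.innerAt l f g := by
  have hdia0 : cdia l ≠ 0 := hdia.ne'
  rw [WGP.sum_m_mul_innerL_one_upL h1 h2 h3 hl0 (Int.lt_of_le_sub_one hld)]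
  field_simp
  ring
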